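/- (Bourgain–Chang) For every real b ≥ 0 there exists a positive integer k = k(b) such that for every finite set A of nonzero rational numbers with |A| ≥ 2, max{|kA|, |A^{(k)}|} ≥ |A|^b. -/

import Mathlib

open Finset Pointwise

/-- The `k`-fold sumset of a finite set `A` of rationals. -/
def kfoldSum (k : ℕ) (A : Finset ℚ) : Finset ℚ :=
  (Fintype.piFinset fun _ : Fin k => A).image fun f => ∑ i, f i

/-- The `k`-fold product set of a finite set `A` of rationals. -/
def kfoldProd (k : ℕ) (A : Finset ℚ) : Finset ℚ :=
  (Fintype.piFinset fun _ : Fin k => A).image fun f => ∏ i, f i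

/-!
For a finite set `A` of nonzero integers, either `A` carries a weight of large mass `φ` whose
`2h`-th moment is as small as for a set without additive structure, and then `#(h • A) ≥ φ ^ h`, or
multiplication by `A` makes every set grow at a rate governed by `#A / φ`, and iteration makes
`A ^ k` large.

The dichotomy is proved by induction along the fibres of `p`-adic valuations. In a solution of
`a₁ + ⋯ + aₕ = b₁ + ⋯ + bₕ` the least valuation is attained twice, so by the Hölder inequality
the masses of the weights on the fibres add up to a mass on `A`, up to the loss `C = (2h)²`. On the
multiplicative side valuations add up, so passing from `B` to `A * B` shifts the fibres of `B` by
each valuation that occurs in `A`. The shifts by the valuations of two fibres of `A` already produce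
a gain, by a one-dimensional Prékopa–Leindler type inequality, and this gain outweighs `C` once the
exponent `η` is small enough.
-/

@[to_additive]
lemma pow_eq_image_prod {M : Type*} [CommMonoid M] [DecidableEq M] (k : ℕ) (A : Finset M) :
    A ^ k = (Fintype.piFinset fun _ : Fin k => A).image fun f => ∏ i, f i := by
  ext x
  simp only [mem_pow, mem_image, Fintype.mem_piFinset, List.prod_ofFn]
  constructor
  · rintro ⟨f, rfl⟩
    exact ⟨fun i => f i, fun i => (f i).2, rfl⟩
  · rintro ⟨f, hf, rfl⟩
    exact ⟨fun i => ⟨f i, hf i⟩, rfl⟩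

/-! ### Trigonometric polynomials and solutions of linear equations -/

/-- The trigonometric polynomial with coefficients `f` and frequencies in `A`. -/
noncomputable def trigPoly (A : Finset ℤ) (f : ℤ → ℝ) (t : UnitAddCircle) : ℂ :=
  ∑ a ∈ A, (f a : ℂ) * fourier a t

@[fun_prop]
lemma continuous_trigPoly (A : Finset ℤ) (f : ℤ → ℝ) : Continuous (trigPoly A f) := by
  unfold trigPoly
  fun_prop

lemma trigPoly_congr {A : Finset ℤ} {f g : ℤ → ℝ} (hfg : ∀ a ∈ A, f a = g a) :
    trigPoly A f = trigPoly A g := by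
  ext t
  exact sum_congr rfl fun a ha => by rw [hfg a ha]

lemma trigPoly_neg (A : Finset ℤ) (f : ℤ → ℝ) (t : UnitAddCircle) :
    trigPoly A f (-t) = (starRingEnd ℂ) (trigPoly A f t) := by
  simp [trigPoly]

lemma norm_trigPoly_zsmul (A : Finset ℤ) (f : ℤ → ℝ) {n : ℤ} (hn : IsUnit n)
    (t : UnitAddCircle) : ‖trigPoly A f (n • t)‖ = ‖trigPoly A f t‖ := by
  rcases Int.isUnit_iff.mp hn with rfl | rfl
  · rw [one_smul]
  · rw [neg_one_smul, trigPoly_neg, Complex.norm_conj]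

lemma trigPoly_const_mul (A : Finset ℤ) (f : ℤ → ℝ) (c : ℝ) (t : UnitAddCircle) :
    trigPoly A (fun a => c * f a) t = c * trigPoly A f t := by
  simp only [trigPoly, mul_sum, Complex.ofReal_mul, mul_assoc]

lemma trigPoly_indicator (A : Finset ℤ) (s : Set ℤ) [DecidablePred (· ∈ s)] (f : ℤ → ℝ) :
    trigPoly A (s.indicator f) = trigPoly {a ∈ A | a ∈ s} f := by
  ext t
  rw [trigPoly, trigPoly, sum_filter]
  refine sum_congr rfl fun a _ => ?_
  by_cases ha : a ∈ s <;> simp [ha]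

open MeasureTheory AddCircle in
lemma integral_fourier_eq_ite (n : ℤ) :
    ∫ t : UnitAddCircle, fourier n t ∂haarAddCircle = if n = 0 then 1 else 0 := by
  have h := orthonormal_iff_ite.mp (orthonormal_fourier (T := 1)) 0 n
  rw [ContinuousMap.inner_toLp (𝕜 := ℂ) haarAddCircle (fourier 0) (fourier n)] at h
  simpa [eq_comm] using h

section FibreWeights

variable {ι J : Type*} [DecidableEq ι]

/-- The weights `f`, restricted to the fibre `{a | v a = j}` in the coordinates `i ∈ S`. -/
noncomputable def fibreWeights (v : ℤ → J) (f : ℤ → ℝ) (S : Finset ι)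
    (j : J) (i : ι) : ℤ → ℝ :=
  if i ∈ S then Set.indicator {a | v a = j} f else f

variable {v : ℤ → J} {f : ℤ → ℝ}

lemma fibreWeights_nonneg (hf : ∀ a, 0 ≤ f a) (S : Finset ι) (j : J) (i : ι) (a : ℤ) :
    0 ≤ fibreWeights v f S j i a := by
  unfold fibreWeights
  split_ifs
  · exact Set.indicator_nonneg (fun a _ => hf a) a
  · exact hf a

lemma fibreWeights_apply_of_eq {S : Finset ι} {j : J} {x : ι → ℤ} (hx : ∀ i ∈ S, v (x i) = j)
    (i : ι) : fibreWeights v f S j i (x i) = f (x i) := by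
  unfold fibreWeights
  split_ifs with hi
  · exact Set.indicator_of_mem (show x i ∈ {a | v a = j} from hx i hi) f
  · rfl

end FibreWeights

section LinearSolutions

variable {ι : Type*} [Fintype ι] [DecidableEq ι]

open MeasureTheory AddCircle

/-- The solutions of the linear equation `∑ i, ε i * x i = 0` with all variables in `A`. -/
def linearSolutions (ε : ι → ℤ) (A : Finset ℤ) : Finset (ι → ℤ) :=
  {x ∈ Fintype.piFinset fun _ => A | ∑ i, ε i * x i = 0}

lemma mem_linearSolutions {ε : ι → ℤ} {A : Finset ℤ} {x : ι → ℤ} :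
    x ∈ linearSolutions ε A ↔ (∀ i, x i ∈ A) ∧ ∑ i, ε i * x i = 0 := by
  rw [linearSolutions, mem_filter, Fintype.mem_piFinset]

lemma prod_trigPoly_zsmul (ε : ι → ℤ) (A : Finset ℤ) (g : ι → ℤ → ℝ) (t : UnitAddCircle) :
    ∏ i, trigPoly A (g i) (ε i • t) =
      ∑ x ∈ Fintype.piFinset fun _ => A,
        ((∏ i, g i (x i) : ℝ) : ℂ) * fourier (∑ i, ε i * x i) t := by
  have hprod (s : Finset ι) (x : ι → ℤ) :
      ∏ i ∈ s, (fourier (x i) (ε i • t) : ℂ) = fourier (∑ i ∈ s, ε i * x i) t := by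
    induction s using Finset.induction_on with
    | empty => simp
    | insert a s ha ih =>
      rw [prod_insert ha, sum_insert ha, fourier_add, ih]
      simp only [fourier_apply, smul_smul, mul_comm (x a)]
  simp only [trigPoly, prod_univ_sum, prod_mul_distrib, hprod, Complex.ofReal_prod]

lemma integral_prod_trigPoly_zsmul (ε : ι → ℤ) (A : Finset ℤ) (g : ι → ℤ → ℝ) :
    ∫ t, ∏ i, trigPoly A (g i) (ε i • t) ∂haarAddCircle =
      ((∑ x ∈ linearSolutions ε A, ∏ i, g i (x i) : ℝ) : ℂ) := by
  simp_rw [prod_trigPoly_zsmul]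
  rw [integral_finsetSum _ fun x _ => Continuous.integrable_of_hasCompactSupport (by fun_prop)
    (HasCompactSupport.of_compactSpace _)]
  simp only [integral_const_mul, integral_fourier_eq_ite, mul_ite, mul_one, mul_zero,
    linearSolutions, sum_filter, Complex.ofReal_sum]
  exact sum_congr rfl fun x _ => by split_ifs <;> simp

lemma sum_linearSolutions_le_integral {ε : ι → ℤ} (hε : ∀ i, IsUnit (ε i)) (A : Finset ℤ)
    (g : ι → ℤ → ℝ) :
    ∑ x ∈ linearSolutions ε A, ∏ i, g i (x i) ≤
      ∫ t, ∏ i, ‖trigPoly A (g i) t‖ ∂haarAddCircle := by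
  calc ∑ x ∈ linearSolutions ε A, ∏ i, g i (x i)
      ≤ ‖∫ t, ∏ i, trigPoly A (g i) (ε i • t) ∂haarAddCircle‖ := by
        rw [integral_prod_trigPoly_zsmul, Complex.norm_real]
        exact Real.le_norm_self _
    _ ≤ ∫ t, ‖∏ i, trigPoly A (g i) (ε i • t)‖ ∂haarAddCircle := norm_integral_le_integral_norm _
    _ = ∫ t, ∏ i, ‖trigPoly A (g i) t‖ ∂haarAddCircle := by
        simp only [norm_prod, norm_trigPoly_zsmul _ _ (hε _)]

lemma prod_ite_mem_pair {M : Type*} [CommMonoid M] {s t : ι} (hst : s ≠ t) (a b : M) :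
    ∏ i, (if i ∈ ({s, t} : Finset ι) then a else b) = a ^ 2 * b ^ (Fintype.card ι - 2) := by
  rw [prod_ite, prod_const, prod_const, filter_mem_eq_inter, univ_inter, filter_not,
    filter_mem_eq_inter, univ_inter, card_univ_sdiff, card_pair hst]

section Fibres

variable {J : Type*} [DecidableEq J] {v : ℤ → J} {f : ℤ → ℝ}

lemma prod_norm_trigPoly_fibreWeights (A : Finset ℤ) {s t : ι} (hst : s ≠ t) (j : J)
    (θ : UnitAddCircle) :
    ∏ i, ‖trigPoly A (fibreWeights v f {s, t} j i) θ‖ =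
      ‖trigPoly {a ∈ A | v a = j} f θ‖ ^ 2 * ‖trigPoly A f θ‖ ^ (Fintype.card ι - 2) := by
  rw [← prod_ite_mem_pair hst]
  refine prod_congr rfl fun i _ => ?_
  unfold fibreWeights
  split_ifs
  · rw [trigPoly_indicator]
    rfl
  · rfl

lemma prod_le_sum_prod_fibreWeights {A : Finset ℤ} (hf : ∀ a, 0 ≤ f a) {x : ι → ℤ} {s t : ι}
    (hxs : x s ∈ A) (hst : s ≠ t) (hv : v (x s) = v (x t)) :
    ∏ i, f (x i) ≤ ∑ q ∈ (univ : Finset ι).offDiag, ∑ j ∈ A.image v,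
      ∏ i, fibreWeights v f {q.1, q.2} j i (x i) := by
  have hnonneg (q : ι × ι) (j : J) : 0 ≤ ∏ i, fibreWeights v f {q.1, q.2} j i (x i) :=
    prod_nonneg fun i _ => fibreWeights_nonneg hf ..
  have hfibre : ∏ i, f (x i) = ∏ i, fibreWeights v f {s, t} (v (x s)) i (x i) :=
    (prod_congr rfl fun i _ => fibreWeights_apply_of_eq (by simp [hv]) i).symm
  rw [hfibre, ← sum_product']
  exact single_le_sum
    (f := fun p : (ι × ι) × J => ∏ i, fibreWeights v f {p.1.1, p.1.2} p.2 i (x i))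
    (fun p _ => hnonneg p.1 p.2) (a := ((s, t), v (x s)))
    (mem_product.mpr ⟨mem_offDiag.mpr ⟨mem_univ s, mem_univ t, hst⟩, mem_image_of_mem v hxs⟩)

lemma sum_linearSolutions_le_sum_fibres {ε : ι → ℤ} {A : Finset ℤ} (hε : ∀ i, IsUnit (ε i))
    (hv : ∀ x ∈ linearSolutions ε A, ∃ s t, s ≠ t ∧ v (x s) = v (x t)) (hf : ∀ a, 0 ≤ f a) :
    ∑ x ∈ linearSolutions ε A, ∏ i, f (x i) ≤
      #(univ : Finset ι).offDiag * ∑ j ∈ A.image v,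
        ∫ θ, ‖trigPoly {a ∈ A | v a = j} f θ‖ ^ 2 * ‖trigPoly A f θ‖ ^ (Fintype.card ι - 2)
          ∂haarAddCircle := by
  calc ∑ x ∈ linearSolutions ε A, ∏ i, f (x i)
      ≤ ∑ x ∈ linearSolutions ε A, ∑ q ∈ (univ : Finset ι).offDiag, ∑ j ∈ A.image v,
          ∏ i, fibreWeights v f {q.1, q.2} j i (x i) := by
        refine sum_le_sum fun x hx => ?_
        obtain ⟨s, t, hst, hvst⟩ := hv x hx
        exact prod_le_sum_prod_fibreWeights hf ((mem_linearSolutions.mp hx).1 s) hst hvst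
    _ = ∑ q ∈ (univ : Finset ι).offDiag, ∑ j ∈ A.image v, ∑ x ∈ linearSolutions ε A,
          ∏ i, fibreWeights v f {q.1, q.2} j i (x i) := by
        rw [sum_comm]
        exact sum_congr rfl fun q _ => sum_comm
    _ ≤ ∑ _q ∈ (univ : Finset ι).offDiag, ∑ j ∈ A.image v,
          ∫ θ, ‖trigPoly {a ∈ A | v a = j} f θ‖ ^ 2 * ‖trigPoly A f θ‖ ^ (Fintype.card ι - 2)
            ∂haarAddCircle := by
        refine sum_le_sum fun q hq => sum_le_sum fun j _ => ?_
        refine (sum_linearSolutions_le_integral hε A _).trans_eq ?_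
        simp only [prod_norm_trigPoly_fibreWeights A (mem_offDiag.mp hq).2.2]
    _ = _ := by rw [sum_const, nsmul_eq_mul]

end Fibres

end LinearSolutions

/-! ### Moments and spread weights -/

section Moments

open MeasureTheory AddCircle

/-- The `2h`-th moment of the trigonometric polynomial with coefficients `f` on `A`. -/
noncomputable def moment (h : ℕ) (A : Finset ℤ) (f : ℤ → ℝ) : ℝ :=
  ∫ t, ‖trigPoly A f t‖ ^ (2 * h) ∂haarAddCircle

variable {h : ℕ} {A : Finset ℤ} {f : ℤ → ℝ}

lemma moment_nonneg : 0 ≤ moment h A f :=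
  integral_nonneg fun _ => by positivity

lemma moment_const_mul (h : ℕ) (A : Finset ℤ) (f : ℤ → ℝ) (c : ℝ) :
    moment h A (fun a => c * f a) = c ^ (2 * h) * moment h A f := by
  simp only [moment, trigPoly_const_mul, norm_mul, mul_pow, Complex.norm_real, integral_const_mul,
    Real.norm_eq_abs, pow_mul, sq_abs]

/-- The signs of the `2h` variables in the equation `a₁ + ⋯ + aₕ = b₁ + ⋯ + bₕ`. -/
def halfSign (h : ℕ) : Fin h ⊕ Fin h → ℤ :=
  Sum.elim (fun _ => 1) (fun _ => -1)

lemma isUnit_halfSign (i : Fin h ⊕ Fin h) : IsUnit (halfSign h i) := by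
  cases i <;> simp [halfSign]

lemma moment_eq_sum_linearSolutions (h : ℕ) (A : Finset ℤ) (f : ℤ → ℝ) :
    moment h A f = ∑ x ∈ linearSolutions (halfSign h) A, ∏ i, f (x i) := by
  have hprod (t : UnitAddCircle) :
      ∏ i, trigPoly A f (halfSign h i • t) = ((‖trigPoly A f t‖ ^ (2 * h) : ℝ) : ℂ) := by
    simp only [halfSign, Fintype.prod_sum_type, Sum.elim_inl, Sum.elim_inr, one_smul,
      neg_one_smul, trigPoly_neg, prod_const, card_univ, Fintype.card_fin]
    rw [← mul_pow, Complex.mul_conj, Complex.normSq_eq_norm_sq, ← Complex.ofReal_pow, pow_mul]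
  rw [← Complex.ofReal_inj, ← integral_prod_trigPoly_zsmul (halfSign h) A fun _ => f, moment,
    ← integral_complex_ofReal]
  simp only [hprod]

lemma moment_eq_sum_sq (h : ℕ) (A : Finset ℤ) (f : ℤ → ℝ) :
    moment h A f = ∑ n ∈ h • A,
      (∑ u ∈ Fintype.piFinset fun _ : Fin h => A with ∑ i, u i = n, ∏ i, f (u i)) ^ 2 := by
  set P := Fintype.piFinset fun _ : Fin h => A
  have hsplit : moment h A f = ∑ u ∈ P, ∑ v ∈ P,
      if ∑ i, v i = ∑ i, u i then (∏ i, f (u i)) * ∏ i, f (v i) else 0 := by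
    rw [moment_eq_sum_linearSolutions, linearSolutions, sum_filter, ← sum_product']
    refine sum_equiv (Equiv.sumArrowEquivProdArrow _ _ _) (fun x => ?_) fun x _ => ?_
    · simp [P, Fintype.mem_piFinset]
    · simp only [halfSign, Fintype.sum_sum_type, Fintype.prod_sum_type, Sum.elim_inl,
        Sum.elim_inr, one_mul, neg_mul, sum_neg_distrib, Equiv.sumArrowEquivProdArrow,
        Equiv.coe_fn_mk, Function.comp_apply, add_neg_eq_zero]
      simp only [eq_comm]
  rw [hsplit, nsmul_eq_image_sum, ← sum_fiberwise_of_maps_to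
    (fun u hu => mem_image_of_mem (fun u : Fin h → ℤ => ∑ i, u i) hu)]
  refine sum_congr rfl fun n _ => ?_
  rw [sq, sum_mul_sum]
  refine sum_congr rfl fun u hu => ?_
  rw [(mem_filter.mp hu).2, ← sum_filter]

lemma integral_rpow_mul_rpow_le {α : Type*} [MeasurableSpace α] {μ : Measure α} {F G : α → ℝ}
    (hF : Integrable F μ) (hG : Integrable G μ) (hF₀ : ∀ x, 0 ≤ F x) (hG₀ : ∀ x, 0 ≤ G x)
    {p q : ℝ} (hp : 0 ≤ p) (hq : 0 ≤ q) (hpq : p + q = 1) :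
    ∫ x, F x ^ p * G x ^ q ∂μ ≤ (∫ x, F x ∂μ) ^ p * (∫ x, G x ∂μ) ^ q := by
  have hFi : 0 ≤ ∫ x, F x ∂μ := integral_nonneg fun x => hF₀ x
  have hGi : 0 ≤ ∫ x, G x ∂μ := integral_nonneg fun x => hG₀ x
  have hofReal (x : α) : ENNReal.ofReal (F x ^ p * G x ^ q) =
      ENNReal.ofReal (F x) ^ p * ENNReal.ofReal (G x) ^ q := by
    rw [ENNReal.ofReal_mul (Real.rpow_nonneg (hF₀ x) p), ENNReal.ofReal_rpow_of_nonneg (hF₀ x) hp,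
      ENNReal.ofReal_rpow_of_nonneg (hG₀ x) hq]
  rw [integral_eq_lintegral_of_nonneg_ae
    (.of_forall fun x => mul_nonneg (Real.rpow_nonneg (hF₀ x) p) (Real.rpow_nonneg (hG₀ x) q))
    (by fun_prop (disch := assumption))]
  refine ENNReal.toReal_le_of_le_ofReal (by positivity) ?_
  rw [ENNReal.ofReal_mul (by positivity), ← ENNReal.ofReal_rpow_of_nonneg hFi hp,
    ← ENNReal.ofReal_rpow_of_nonneg hGi hq,
    ofReal_integral_eq_lintegral_ofReal hF (.of_forall hF₀),
    ofReal_integral_eq_lintegral_ofReal hG (.of_forall hG₀)]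
  simp only [hofReal]
  exact ENNReal.lintegral_mul_norm_pow_le hF.aemeasurable.ennreal_ofReal
    hG.aemeasurable.ennreal_ofReal hp hq hpq

lemma integral_sq_mul_pow_le_moment (hh : h ≠ 0) (B : Finset ℤ) (g : ℤ → ℝ) :
    ∫ t, ‖trigPoly B g t‖ ^ 2 * ‖trigPoly A f t‖ ^ (2 * h - 2) ∂haarAddCircle ≤
      moment h B g ^ ((h : ℝ)⁻¹) * moment h A f ^ (1 - (h : ℝ)⁻¹) := by
  have hint (B : Finset ℤ) (g : ℤ → ℝ) :
      Integrable (fun t => ‖trigPoly B g t‖ ^ (2 * h)) haarAddCircle :=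
    Continuous.integrable_of_hasCompactSupport (by fun_prop) (HasCompactSupport.of_compactSpace _)
  have hh' : (1 : ℝ) ≤ h := by exact_mod_cast Nat.one_le_iff_ne_zero.mpr hh
  refine Eq.trans_le ?_ (integral_rpow_mul_rpow_le (hint B g) (hint A f) (fun _ => by positivity)
    (fun _ => by positivity) (by positivity) (sub_nonneg.mpr (inv_le_one_of_one_le₀ hh')) (by ring))
  congr! 3 with t
  · rw [pow_mul, Real.pow_rpow_inv_natCast (by positivity) hh]
  · rw [← Real.rpow_natCast, ← Real.rpow_natCast, ← Real.rpow_mul (norm_nonneg _),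
      Nat.cast_sub (by lia)]
    push_cast
    congr 1
    field_simp

lemma le_pow_of_le_mul_rpow (hh : h ≠ 0) {c x : ℝ} (hc : 0 ≤ c) (hx : 0 ≤ x)
    (hxc : x ≤ c * x ^ (1 - (h : ℝ)⁻¹)) : x ≤ c ^ h := by
  rcases hx.eq_or_lt with rfl | hx'
  · positivity
  · rw [Real.rpow_sub hx', Real.rpow_one, mul_div_assoc', le_div_iff₀ (by positivity),
      mul_comm] at hxc
    calc x = (x ^ ((h : ℝ)⁻¹)) ^ h := (Real.rpow_inv_natCast_pow hx hh).symm
      _ ≤ c ^ h := by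
        gcongr
        exact le_of_mul_le_mul_right hxc hx'

variable {J : Type*} [DecidableEq J] {v : ℤ → J}

lemma moment_le_of_fibres (hh : h ≠ 0) (hf : ∀ a, 0 ≤ f a)
    (hv : ∀ x ∈ linearSolutions (halfSign h) A, ∃ s t, s ≠ t ∧ v (x s) = v (x t)) :
    moment h A f ≤
      ((2 * h) ^ 2 * ∑ j ∈ A.image v, moment h {a ∈ A | v a = j} f ^ ((h : ℝ)⁻¹)) ^ h := by
  have hfib (j : J) : 0 ≤ moment h {a ∈ A | v a = j} f ^ ((h : ℝ)⁻¹) :=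
    Real.rpow_nonneg moment_nonneg _
  have hcard : #(univ : Finset (Fin h ⊕ Fin h)).offDiag ≤ (2 * h) ^ 2 := by
    rw [offDiag_card, card_univ, Fintype.card_sum, Fintype.card_fin, ← two_mul, sq]
    exact Nat.sub_le _ _
  refine le_pow_of_le_mul_rpow hh (mul_nonneg (by positivity) (sum_nonneg fun j _ => hfib j))
    moment_nonneg ?_
  rw [mul_assoc, sum_mul]
  conv_lhs => rw [moment_eq_sum_linearSolutions]
  refine (sum_linearSolutions_le_sum_fibres isUnit_halfSign hv hf).trans ?_
  refine mul_le_mul (by exact_mod_cast hcard) (sum_le_sum fun j _ => ?_)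
    (sum_nonneg fun j _ => integral_nonneg fun _ => by positivity) (by positivity)
  rw [Fintype.card_sum, Fintype.card_fin, ← two_mul]
  exact integral_sq_mul_pow_le_moment hh _ _

/-- Additive spread of `A`: some nonnegative weight of total mass `φ` on `A` has `2h`-th moment at
most `φ ^ h`, which forces `#(h • A)` to be at least `φ ^ h`. Allowing arbitrary weights instead of
constant ones makes the notion monotone in `A`. -/
def HasSpreadWeight (h : ℕ) (A : Finset ℤ) (φ : ℝ) : Prop :=
  ∃ f : ℤ → ℝ, (∀ a, 0 ≤ f a) ∧ ∑ a ∈ A, f a = φ ∧ moment h A f ≤ φ ^ h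

namespace HasSpreadWeight

variable {φ : ℝ}

lemma nonneg (hA : HasSpreadWeight h A φ) : 0 ≤ φ := by
  obtain ⟨f, hf, rfl, -⟩ := hA
  exact sum_nonneg fun a _ => hf a

lemma mono {B : Finset ℤ} (hA : HasSpreadWeight h A φ) (hAB : A ⊆ B) :
    HasSpreadWeight h B φ := by
  obtain ⟨f, hf, hsum, hmom⟩ := hA
  have hinter : {a ∈ B | a ∈ (A : Set ℤ)} = A := by
    simpa [filter_mem_eq_inter] using hAB
  refine ⟨Set.indicator A f, Set.indicator_nonneg fun a _ => hf a, ?_, ?_⟩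
  · rwa [sum_indicator_subset f hAB]
  · rwa [moment, trigPoly_indicator, hinter]

lemma one_of_nonempty (hA : A.Nonempty) : HasSpreadWeight h A 1 := by
  obtain ⟨a, ha⟩ := hA
  suffices HasSpreadWeight h {a} 1 from this.mono (singleton_subset_iff.mpr ha)
  refine ⟨fun _ => 1, fun _ => zero_le_one, by simp, ?_⟩
  have hnorm (t : UnitAddCircle) : ‖(fourier a t : ℂ)‖ = 1 := Circle.norm_coe _
  simp [moment, trigPoly, -fourier_apply, hnorm]

lemma pow_le_card_nsmul (hA : HasSpreadWeight h A φ) (hφ : 0 < φ) : φ ^ h ≤ #(h • A) := by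
  obtain ⟨f, -, hsum, hmom⟩ := hA
  rw [moment_eq_sum_sq] at hmom
  have hpow : φ ^ h = ∑ n ∈ h • A,
      ∑ u ∈ Fintype.piFinset fun _ : Fin h => A with ∑ i, u i = n, ∏ i, f (u i) := by
    rw [nsmul_eq_image_sum, sum_fiberwise_of_maps_to
      (fun u hu => mem_image_of_mem (fun u : Fin h → ℤ => ∑ i, u i) hu), ← hsum, sum_pow']
  have hcs := sq_sum_le_card_mul_sum_sq (s := h • A) (f := fun n =>
    ∑ u ∈ Fintype.piFinset fun _ : Fin h => A with ∑ i, u i = n, ∏ i, f (u i))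
  rw [← hpow, sq] at hcs
  exact le_of_mul_le_mul_right (hcs.trans (by gcongr)) (by positivity)

lemma of_fibres (hh : h ≠ 0)
    (hv : ∀ x ∈ linearSolutions (halfSign h) A, ∃ s t, s ≠ t ∧ v (x s) = v (x t)) {φ : J → ℝ}
    (hφ : ∀ j ∈ A.image v, HasSpreadWeight h {a ∈ A | v a = j} (φ j)) :
    HasSpreadWeight h A ((∑ j ∈ A.image v, φ j) / (2 * h) ^ 2) := by
  have hφ₀ (j : J) (hj : j ∈ A.image v) : 0 ≤ φ j := (hφ j hj).nonneg
  choose! F hF hFsum hFmom using hφ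
  set S := ∑ j ∈ A.image v, φ j
  set f : ℤ → ℝ := Set.indicator A fun a => F (v a) a
  have hf (a : ℤ) : 0 ≤ f a :=
    Set.indicator_nonneg (fun a ha => hF _ (mem_image_of_mem v ha) a) a
  have hfF (j : J) (a : ℤ) (ha : a ∈ ({a ∈ A | v a = j} : Finset ℤ)) : f a = F j a := by
    obtain ⟨haA, rfl⟩ := mem_filter.mp ha
    exact Set.indicator_of_mem (mem_coe.mpr haA) _
  have hfsum : ∑ a ∈ A, f a = S := by
    rw [← sum_fiberwise_of_maps_to fun a ha => mem_image_of_mem v ha]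
    exact sum_congr rfl fun j hj => (sum_congr rfl (hfF j)).trans (hFsum j hj)
  have hfib (j : J) (hj : j ∈ A.image v) : moment h {a ∈ A | v a = j} f ^ ((h : ℝ)⁻¹) ≤ φ j := by
    rw [← Real.pow_rpow_inv_natCast (hφ₀ j hj) hh, moment, trigPoly_congr (hfF j)]
    exact Real.rpow_le_rpow moment_nonneg (hFmom j hj) (by positivity)
  have hmom : moment h A f ≤ ((2 * h) ^ 2 * S) ^ h :=
    (moment_le_of_fibres hh hf hv).trans (pow_le_pow_left₀ (mul_nonneg (by positivity)
      (sum_nonneg fun _ _ => Real.rpow_nonneg moment_nonneg _))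
      (mul_le_mul_of_nonneg_left (sum_le_sum hfib) (by positivity)) h)
  refine ⟨fun a => ((2 * h : ℝ) ^ 2)⁻¹ * f a, fun a => mul_nonneg (by positivity) (hf a), ?_, ?_⟩
  · rw [← mul_sum, hfsum, div_eq_inv_mul]
  · rw [moment_const_mul]
    calc (((2 * h : ℝ) ^ 2)⁻¹) ^ (2 * h) * moment h A f
        ≤ (((2 * h : ℝ) ^ 2)⁻¹) ^ (2 * h) * ((2 * h) ^ 2 * S) ^ h := by gcongr
      _ = (S / (2 * h) ^ 2) ^ h := by
        rw [pow_mul, ← mul_pow]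
        congr 1
        field_simp

lemma exists_ge_of_fibres (hh : h ≠ 0) (hA : A.Nonempty)
    (hv : ∀ x ∈ linearSolutions (halfSign h) A, ∃ s t, s ≠ t ∧ v (x s) = v (x t)) {φ : J → ℝ}
    (hφ : ∀ j ∈ A.image v, HasSpreadWeight h {a ∈ A | v a = j} (φ j)) :
    ∃ Φ, HasSpreadWeight h A Φ ∧ (∀ j ∈ A.image v, φ j ≤ Φ) ∧
      ∑ j ∈ A.image v, φ j ≤ (2 * h) ^ 2 * Φ := by
  have hall := of_fibres hh hv hφ
  obtain ⟨m, hm, hmax⟩ := exists_max_image (A.image v) φ (hA.image v)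
  have hC : (0 : ℝ) < (2 * h) ^ 2 := by positivity
  rcases le_total (φ m) ((∑ j ∈ A.image v, φ j) / (2 * h) ^ 2) with hle | hle
  · exact ⟨_, hall, fun j hj => (hmax j hj).trans hle, (mul_div_cancel₀ _ hC.ne').ge⟩
  · exact ⟨φ m, (hφ m hm).mono (filter_subset _ _), hmax, (div_le_iff₀' hC).mp hle⟩

end HasSpreadWeight

end Moments

/-! ### Valuations of integers -/

lemma exists_padicValInt_eq_of_sum_eq_zero {ι : Type*} [Fintype ι] [Nonempty ι] (p : ℕ)
    [Fact p.Prime] {ε x : ι → ℤ} (hε : ∀ i, IsUnit (ε i)) (hx : ∀ i, x i ≠ 0)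
    (hsum : ∑ i, ε i * x i = 0) :
    ∃ s t, s ≠ t ∧ padicValInt p (x s) = padicValInt p (x t) := by
  classical
  by_contra! hne
  obtain ⟨s, -, hs⟩ := exists_min_image univ (fun i => padicValInt p (x i)) univ_nonempty
  have hdvd (i : ι) (hi : i ≠ s) : (p : ℤ) ^ (padicValInt p (x s) + 1) ∣ ε i * x i :=
    Dvd.dvd.mul_left ((padicValInt_dvd_iff _ _).mpr
      (.inr ((hs i (mem_univ i)).lt_of_ne (hne s i hi.symm)))) _
  have hs_dvd : (p : ℤ) ^ (padicValInt p (x s) + 1) ∣ ε s * x s := by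
    rw [← add_sum_erase univ _ (mem_univ s)] at hsum
    rw [eq_neg_of_add_eq_zero_left hsum, dvd_neg]
    exact dvd_sum fun i hi => hdvd i (ne_of_mem_erase hi)
  rw [(hε s).dvd_mul_left, padicValInt_dvd_iff] at hs_dvd
  exact hs_dvd.elim (hx s) (Nat.not_succ_le_self _)

lemma exists_padicValInt_eq_of_mem_linearSolutions {ι : Type*} [Fintype ι] [DecidableEq ι]
    [Nonempty ι] (p : ℕ) [Fact p.Prime] {ε x : ι → ℤ} (hε : ∀ i, IsUnit (ε i)) {A : Finset ℤ}
    (hA : 0 ∉ A) (hx : x ∈ linearSolutions ε A) :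
    ∃ s t, s ≠ t ∧ padicValInt p (x s) = padicValInt p (x t) := by
  obtain ⟨hxA, hsum⟩ := mem_linearSolutions.mp hx
  exact exists_padicValInt_eq_of_sum_eq_zero p hε (fun i => ne_of_mem_of_not_mem (hxA i) hA) hsum

lemma exists_prime_padicValInt_ne {A : Finset ℤ} (hA : 0 ∉ A) (hcard : 2 < #A) :
    ∃ p : ℕ, p.Prime ∧ ∃ a ∈ A, ∃ b ∈ A, padicValInt p a ≠ padicValInt p b := by
  by_contra! hall
  obtain ⟨a, ha⟩ : A.Nonempty := card_pos.mp (by lia)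
  have hne (b : ℤ) (hb : b ∈ A) : b.natAbs ≠ 0 :=
    Int.natAbs_ne_zero.mpr (ne_of_mem_of_not_mem hb hA)
  have hsub : A ⊆ {a, -a} := fun b hb => by
    have habs : b.natAbs = a.natAbs :=
      (Nat.eq_iff_prime_padicValNat_eq _ _ (hne b hb) (hne a ha)).mpr
        fun p hp => hall p hp b hb a ha
    simpa using Int.natAbs_eq_natAbs_iff.mp habs
  exact hcard.not_ge ((card_le_card hsub).trans card_le_two)

/-! ### A one-dimensional sup-convolution inequality -/

/-- The exponents `η` admissible in the sup-convolution inequality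
`IsGainExponent.sum_rpow_le_sum`, where `C` is the loss to be compensated and `L` the growth
exponent aimed at. The last field says that `(C / X) ^ (L * η) ≤ 1 + C ^ (-L)` at the threshold
`X = 1 / (4 * L ^ 2 * C ^ 2)` of `one_add_mul_rpow_le_one_add_sqrt`. -/
structure IsGainExponent (C L η : ℝ) : Prop where
  pos : 0 < η
  lt_one : η < 1
  mul_le_half : L * η ≤ 1 / 2
  rpow_le : (4 * L ^ 2 * C ^ 3) ^ (L * η) ≤ 1 + C ^ (-L)

open Filter Topology in
lemma exists_isGainExponent {C L : ℝ} (hC : 0 < C) (hL : 0 < L) : ∃ η, IsGainExponent C L η := by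
  have hlin : Tendsto (fun η : ℝ => L * η) (𝓝[>] 0) (𝓝 0) := by
    simpa using ((continuous_const_mul L).tendsto 0).mono_left nhdsWithin_le_nhds
  have hpow : Tendsto (fun η : ℝ => (4 * L ^ 2 * C ^ 3) ^ (L * η)) (𝓝[>] 0) (𝓝 1) := by
    simpa [Function.comp_def] using (Real.continuousAt_const_rpow (b := 0)
      (by positivity : 4 * L ^ 2 * C ^ 3 ≠ 0)).tendsto.comp hlin
  have hgain : 1 < 1 + C ^ (-L) := lt_add_of_pos_right 1 (by positivity)
  have hsmall : ∀ᶠ η : ℝ in 𝓝[>] 0, η < 1 :=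
    (eventually_lt_nhds one_pos).filter_mono nhdsWithin_le_nhds
  obtain ⟨η, hhalf, hle, hlt, hη⟩ := ((hlin.eventually_le_const one_half_pos).and
    ((hpow.eventually_le_const hgain).and (hsmall.and self_mem_nhdsWithin))).exists
  exact ⟨η, hη, hlt, hhalf, hle⟩

lemma one_add_mul_rpow_le_one_add_sqrt {C L X : ℝ} (hC : 0 < C) (hL : 0 < L) (hX : 0 ≤ X)
    (hX₁ : X ≤ 1) (hX₂ : X ≤ 1 / (4 * L ^ 2 * C ^ 2)) : (1 + C * X) ^ L ≤ 1 + √X := by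
  have hsqrt : √X ≤ 1 / (2 * L * C) :=
    Real.sqrt_le_iff.mpr ⟨by positivity, hX₂.trans_eq (by field_simp; ring)⟩
  have hhalf : L * (C * X) ≤ √X / 2 :=
    calc L * (C * X) = L * C * √X * √X := by rw [mul_assoc _ √X, Real.mul_self_sqrt hX, mul_assoc]
      _ ≤ L * C * √X * (1 / (2 * L * C)) := by gcongr
      _ = √X / 2 := by field_simp
  have hsqrt₁ : √X ≤ 1 := Real.sqrt_le_one.mpr hX₁
  have hsqrt₀ : 0 ≤ √X := Real.sqrt_nonneg X
  calc (1 + C * X) ^ L ≤ Real.exp (C * X) ^ L := by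
        gcongr
        linarith [Real.add_one_le_exp (C * X)]
    _ = Real.exp (L * (C * X)) := by rw [← Real.exp_mul, mul_comm]
    _ ≤ Real.exp (√X / 2) := by gcongr
    _ ≤ 1 / (1 - √X / 2) :=
        Real.exp_bound_div_one_sub_of_interval (by positivity) (by linarith)
    _ ≤ 1 + √X := by
        rw [div_le_iff₀ (by linarith)]
        nlinarith

lemma rpow_mul_rpow_one_sub_le {x y z η : ℝ} (hη₀ : 0 ≤ η) (hη₁ : η ≤ 1) (hx : 0 ≤ x)
    (hy : 0 ≤ y) (hxz : x ≤ z) (hyz : y ≤ z) : x ^ η * y ^ (1 - η) ≤ z := by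
  have hz : 0 ≤ z := hx.trans hxz
  have hη₁' : 0 ≤ 1 - η := sub_nonneg.mpr hη₁
  calc x ^ η * y ^ (1 - η) ≤ z ^ η * z ^ (1 - η) := by gcongr
    _ = z := by rw [← Real.rpow_add_of_nonneg hz hη₀ hη₁', add_sub_cancel, Real.rpow_one]

namespace IsGainExponent

variable {C L η : ℝ}

lemma rpow_le_rpow_mul_of_le (hη : IsGainExponent C L η) (hC : 0 < C) (hL : 0 < L) {X : ℝ}
    (hX : 1 / (4 * L ^ 2 * C ^ 2) ≤ X) : C ^ (L * η) ≤ X ^ (L * η) * (1 + C ^ (-L)) := by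
  have hη₀ := hη.pos
  calc C ^ (L * η) = (1 / (4 * L ^ 2 * C ^ 2)) ^ (L * η) * (4 * L ^ 2 * C ^ 3) ^ (L * η) := by
        rw [← Real.mul_rpow (by positivity) (by positivity)]
        congr 1
        field_simp
    _ ≤ X ^ (L * η) * (1 + C ^ (-L)) := by
        have hX₀ : 0 ≤ X := (by positivity : 0 ≤ 1 / (4 * L ^ 2 * C ^ 2)).trans hX
        gcongr
        exact hη.rpow_le

lemma rpow_mul_rpow_mul_rpow_le {X G Γ W : ℝ} (hη : IsGainExponent C L η) (hC : 1 ≤ C)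
    (hL : 0 < L) (hX₀ : 0 < X) (hX₁ : X ≤ 1) (hG : 0 < G) (hGΓ : G ≤ Γ) (hΓ : Γ ≤ W)
    (hGW : (1 + X ^ (L * η)) * G ≤ W) (hΓW : X ^ (L * η) * (Γ + G) ≤ W) :
    (1 + (C - 1) * X) ^ (L * η) * (G ^ η * Γ ^ (1 - η)) ≤ W := by
  have hη₀ := hη.pos
  have hΓ₀ : 0 < Γ := hG.trans_le hGΓ
  have hC₀ : 0 < C := zero_lt_one.trans_le hC
  have hbase : 0 ≤ 1 + (C - 1) * X :=
    add_nonneg zero_le_one (mul_nonneg (sub_nonneg.mpr hC) hX₀.le)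
  have hbaseC : 1 + (C - 1) * X ≤ C := by nlinarith
  have hinterp {z : ℝ} (hz : (1 + (C - 1) * X) ^ L ≤ z) (hzW : z * G ≤ W) :
      (1 + (C - 1) * X) ^ (L * η) * (G ^ η * Γ ^ (1 - η)) ≤ W := by
    rw [← mul_assoc, Real.rpow_mul hbase, ← Real.mul_rpow (by positivity) hG.le]
    exact rpow_mul_rpow_one_sub_le hη₀.le hη.lt_one.le (by positivity) hΓ₀.le
      ((mul_le_mul_of_nonneg_right hz hG.le).trans hzW) hΓ
  rcases le_or_gt X (1 / (4 * L ^ 2 * C ^ 2)) with hXsmall | hXlarge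
  · refine hinterp ?_ hGW
    calc (1 + (C - 1) * X) ^ L ≤ (1 + C * X) ^ L := by gcongr; linarith
      _ ≤ 1 + √X := one_add_mul_rpow_le_one_add_sqrt hC₀ hL hX₀.le hX₁ hXsmall
      _ ≤ 1 + X ^ (L * η) := by
        rw [Real.sqrt_eq_rpow]
        gcongr 1 + ?_
        exact Real.rpow_le_rpow_of_exponent_ge hX₀ hX₁ hη.mul_le_half
  rcases le_or_gt (C ^ L * G) Γ with hGsmall | hGlarge
  · exact hinterp (by gcongr) (hGsmall.trans hΓ)
  calc (1 + (C - 1) * X) ^ (L * η) * (G ^ η * Γ ^ (1 - η))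
      ≤ C ^ (L * η) * Γ := by
        gcongr
        exact rpow_mul_rpow_one_sub_le hη₀.le hη.lt_one.le hG.le hΓ₀.le hGΓ le_rfl
    _ ≤ X ^ (L * η) * (Γ + C ^ (-L) * Γ) := by
        rw [← one_add_mul, ← mul_assoc]
        gcongr
        exact hη.rpow_le_rpow_mul_of_le hC₀ hL hXlarge.le
    _ ≤ X ^ (L * η) * (Γ + G) := by
        gcongr
        rw [Real.rpow_neg hC₀.le, inv_mul_le_iff₀ (by positivity)]
        exact hGlarge.le
    _ ≤ W := hΓW

end IsGainExponent

section TwoShifts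

variable {M : Type*} [AddCommMonoid M] [LinearOrder M] [IsOrderedCancelAddMonoid M]
  {T : Finset M} {i₀ i₁ k : M} {u w : M → ℝ}

lemma sum_add_le_sum_add_pair (hi : i₀ ≠ i₁) (hw : ∀ n, 0 ≤ w n) (hk : k ∈ T)
    (h₀ : ∀ j ∈ T, u j ≤ w (j + i₀)) (h₁ : ∀ j ∈ T, u j ≤ w (j + i₁)) :
    ∑ j ∈ T, u j + u k ≤ ∑ n ∈ T + {i₀, i₁}, w n := by
  wlog hlt : i₀ < i₁ generalizing i₀ i₁
  · rw [pair_comm]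
    exact this hi.symm h₁ h₀ (hi.lt_or_gt.resolve_left hlt)
  -- The part of `T` up to `k` shifted by `i₀` lies below the part from `k` on shifted by `i₁`,
  -- and `k` belongs to both parts.
  set P := {j ∈ T | j ≤ k}.image (· + i₀)
  set Q := {j ∈ T | k ≤ j}.image (· + i₁)
  have hPQ : Disjoint P Q := by
    simp only [P, Q, disjoint_left, mem_image, mem_filter]
    rintro n ⟨j, ⟨-, hj⟩, rfl⟩ ⟨j', ⟨-, hj'⟩, h⟩
    exact (add_lt_add_of_le_of_lt (hj.trans hj') hlt).ne' h
  have hsub : P ∪ Q ⊆ T + {i₀, i₁} :=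
    union_subset
      (image_subset_iff.mpr fun j hj => add_mem_add (mem_filter.mp hj).1 (mem_insert_self ..))
      (image_subset_iff.mpr fun j hj =>
        add_mem_add (mem_filter.mp hj).1 (mem_insert_of_mem (mem_singleton_self _)))
  have hsplit : ∑ j ∈ T, u j + u k = ∑ j ∈ T with j ≤ k, u j + ∑ j ∈ T with k ≤ j, u j := by
    have hge : {j ∈ T | k ≤ j} = insert k {j ∈ T | ¬ j ≤ k} := by
      ext j
      rw [mem_insert, mem_filter, mem_filter, le_iff_eq_or_lt, not_le]
      grind
    rw [hge, sum_insert (by simp), ← sum_filter_add_sum_filter_not T (· ≤ k)]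
    ring
  calc ∑ j ∈ T, u j + u k = ∑ j ∈ T with j ≤ k, u j + ∑ j ∈ T with k ≤ j, u j := hsplit
    _ ≤ ∑ j ∈ T with j ≤ k, w (j + i₀) + ∑ j ∈ T with k ≤ j, w (j + i₁) :=
        add_le_add (sum_le_sum fun j hj => h₀ j (mem_filter.mp hj).1)
          (sum_le_sum fun j hj => h₁ j (mem_filter.mp hj).1)
    _ = ∑ n ∈ P, w n + ∑ n ∈ Q, w n := by
        rw [sum_image (add_left_injective i₀).injOn, sum_image (add_left_injective i₁).injOn]
    _ = ∑ n ∈ P ∪ Q, w n := (sum_union hPQ).symm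
    _ ≤ ∑ n ∈ T + {i₀, i₁}, w n := sum_le_sum_of_subset_of_nonneg hsub fun n _ _ => hw n

lemma sum_le_sum_add_pair (hw : ∀ n, 0 ≤ w n) (h₀ : ∀ j ∈ T, u j ≤ w (j + i₀)) :
    ∑ j ∈ T, u j ≤ ∑ n ∈ T + {i₀, i₁}, w n :=
  calc ∑ j ∈ T, u j ≤ ∑ j ∈ T, w (j + i₀) := sum_le_sum h₀
    _ = ∑ n ∈ T.image (· + i₀), w n := (sum_image (add_left_injective i₀).injOn).symm
    _ ≤ ∑ n ∈ T + {i₀, i₁}, w n :=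
      sum_le_sum_of_subset_of_nonneg
        (image_subset_iff.mpr fun _ hj => add_mem_add hj (mem_insert_self ..)) fun n _ _ => hw n

lemma add_le_sum_add_pair (hi : i₀ ≠ i₁) (hw : ∀ n, 0 ≤ w n) (hk : k ∈ T) :
    w (k + i₀) + w (k + i₁) ≤ ∑ n ∈ T + {i₀, i₁}, w n := by
  rw [← sum_pair ((add_right_injective k).ne hi)]
  refine sum_le_sum_of_subset_of_nonneg ?_ fun n _ _ => hw n
  rw [insert_subset_iff, singleton_subset_iff]
  exact ⟨add_mem_add hk (mem_insert_self ..),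
    add_mem_add hk (mem_insert_of_mem (mem_singleton_self _))⟩

lemma sum_rpow_le_rpow_mul_sum_rpow {ι : Type*} {s : Finset ι} {b : ι → ℝ} {B η : ℝ}
    (hη₀ : 0 ≤ η) (hη₁ : η ≤ 1) (hB : 0 ≤ B) (hb : ∀ j ∈ s, 0 ≤ b j) (hbB : ∀ j ∈ s, b j ≤ B) :
    (∑ j ∈ s, b j) ^ (1 - η) ≤
      (B ^ (1 - η)) ^ η * (∑ j ∈ s, b j ^ (1 - η)) ^ (1 - η) := by
  have hη₁' : 0 ≤ 1 - η := sub_nonneg.mpr hη₁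
  have hle : ∑ j ∈ s, b j ≤ B ^ η * ∑ j ∈ s, b j ^ (1 - η) := by
    rw [mul_sum]
    refine sum_le_sum fun j hj => ?_
    calc b j = b j ^ η * b j ^ (1 - η) := by
          rw [← Real.rpow_add_of_nonneg (hb j hj) hη₀ hη₁', add_sub_cancel, Real.rpow_one]
      _ ≤ B ^ η * b j ^ (1 - η) :=
        mul_le_mul_of_nonneg_right (Real.rpow_le_rpow (hb j hj) (hbB j hj) hη₀)
          (Real.rpow_nonneg (hb j hj) _)
  calc (∑ j ∈ s, b j) ^ (1 - η) ≤ (B ^ η * ∑ j ∈ s, b j ^ (1 - η)) ^ (1 - η) :=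
        Real.rpow_le_rpow (sum_nonneg hb) hle hη₁'
    _ = (B ^ (1 - η)) ^ η * (∑ j ∈ s, b j ^ (1 - η)) ^ (1 - η) := by
      rw [Real.mul_rpow (Real.rpow_nonneg hB η)
        (sum_nonneg fun j hj => Real.rpow_nonneg (hb j hj) _), ← Real.rpow_mul hB,
        ← Real.rpow_mul hB, mul_comm η]

lemma IsGainExponent.sum_rpow_le_sum {C L η X : ℝ} (hη : IsGainExponent C L η) (hC : 1 ≤ C)
    (hL : 0 < L) (hX₀ : 0 < X) (hX₁ : X ≤ 1) (hi : i₀ ≠ i₁) (hT : T.Nonempty) {b : M → ℝ}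
    (hb : ∀ j ∈ T, 0 < b j) (hw : ∀ n, 0 ≤ w n) (h₀ : ∀ j ∈ T, b j ^ (1 - η) ≤ w (j + i₀))
    (h₁ : ∀ j ∈ T, X ^ (L * η) * b j ^ (1 - η) ≤ w (j + i₁)) :
    (1 + (C - 1) * X) ^ (L * η) * (∑ j ∈ T, b j) ^ (1 - η) ≤ ∑ n ∈ T + {i₀, i₁}, w n := by
  have hη₀ := hη.pos
  obtain ⟨k, hk, hmax⟩ := exists_max_image T b hT
  have hg (j : M) (hj : j ∈ T) : 0 < b j ^ (1 - η) := Real.rpow_pos_of_pos (hb j hj) _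
  have hx : X ^ (L * η) ≤ 1 := Real.rpow_le_one hX₀.le hX₁ (by positivity)
  have hbase : 0 ≤ 1 + (C - 1) * X :=
    add_nonneg zero_le_one (mul_nonneg (sub_nonneg.mpr hC) hX₀.le)
  refine (mul_le_mul_of_nonneg_left (sum_rpow_le_rpow_mul_sum_rpow hη₀.le hη.lt_one.le
    (hb k hk).le (fun j hj => (hb j hj).le) hmax) (Real.rpow_nonneg hbase _)).trans ?_
  refine hη.rpow_mul_rpow_mul_rpow_le hC hL hX₀ hX₁ (hg k hk)
    (single_le_sum (f := fun j => b j ^ (1 - η)) (fun j hj => (hg j hj).le) hk)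
    (sum_le_sum_add_pair hw h₀) ?_ ?_
  · rw [one_add_mul]
    exact (add_le_add (h₀ k hk) (h₁ k hk)).trans (add_le_sum_add_pair hi hw hk)
  · rw [mul_add, mul_sum]
    exact sum_add_le_sum_add_pair (u := fun j => X ^ (L * η) * b j ^ (1 - η)) hi hw hk
      (fun j hj => (mul_le_of_le_one_left (hg j hj).le hx).trans (h₀ j hj)) h₁

end TwoShifts

/-! ### Growth under multiplication -/

/-- Multiplicative expansion at rate `r`: multiplying a finite set `B` of nonzero elements by `A`
brings its cardinality closer to `r ^ L`, by the factor `1 - η` on a logarithmic scale. -/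
def MulExpands {R : Type*} [Mul R] [Zero R] [DecidableEq R] (L η : ℝ) (A : Finset R) (r : ℝ) :
    Prop :=
  ∀ B : Finset R, 0 ∉ B → #B ^ (1 - η) * r ^ (L * η) ≤ #(A * B)

namespace MulExpands

variable {L η r : ℝ}

lemma of_le_one {R : Type*} [MulZeroClass R] [IsLeftCancelMulZero R] [DecidableEq R] {A : Finset R}
    (hη₀ : 0 ≤ η) (hη₁ : η < 1) (hL : 0 ≤ L) (hr₀ : 0 ≤ r) (hr₁ : r ≤ 1) (hA : 0 ∉ A)
    (hne : A.Nonempty) : MulExpands L η A r := by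
  intro B _
  obtain ⟨a, ha⟩ := hne
  have hmul : #B ≤ #(A * B) :=
    card_le_card_mul_left_of_injective ha (mul_right_injective₀ (ne_of_mem_of_not_mem ha hA))
  have hpow : (#B : ℝ) ^ (1 - η) ≤ #B := by
    rcases B.eq_empty_or_nonempty with rfl | hB
    · rw [card_empty, Nat.cast_zero, Real.zero_rpow (sub_pos.mpr hη₁).ne']
    · exact Real.rpow_le_self_of_one_le (by exact_mod_cast hB.card_pos) (by linarith)
  calc (#B : ℝ) ^ (1 - η) * r ^ (L * η) ≤ #B * 1 := by
        gcongr
        exact Real.rpow_le_one hr₀ hr₁ (by positivity)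
    _ ≤ #(A * B) := by rw [mul_one]; exact_mod_cast hmul

lemma mono_right {R : Type*} [Mul R] [Zero R] [DecidableEq R] {A : Finset R} {s : ℝ}
    (hA : MulExpands L η A s) (hL : 0 ≤ L) (hη : 0 ≤ η) (hr : 0 ≤ r) (hrs : r ≤ s) :
    MulExpands L η A r :=
  fun B hB => le_trans (by gcongr) (hA B hB)

lemma rpow_le_card_pow {R : Type*} [MonoidWithZero R] [NoZeroDivisors R] [Nontrivial R]
    [DecidableEq R] {A : Finset R} (hA : MulExpands L η A r) (h0 : 0 ∉ A) (hη : η ≤ 1)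
    (hr : 0 < r) (k : ℕ) : r ^ (L * (1 - (1 - η) ^ k)) ≤ #(A ^ k) := by
  have h0pow (k : ℕ) : 0 ∉ A ^ k := by
    induction k with
    | zero => simp
    | succ k ih =>
      rw [pow_succ, mem_mul]
      rintro ⟨a, ha, b, hb, hab⟩
      rcases mul_eq_zero.mp hab with rfl | rfl
      exacts [ih ha, h0 hb]
  induction k with
  | zero => simp
  | succ k ih =>
    rw [pow_succ' A]
    refine le_trans ?_ (hA _ (h0pow k))
    calc r ^ (L * (1 - (1 - η) ^ (k + 1)))
        = (r ^ (L * (1 - (1 - η) ^ k))) ^ (1 - η) * r ^ (L * η) := by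
          rw [← Real.rpow_mul hr.le, ← Real.rpow_add hr]
          ring_nf
      _ ≤ #(A ^ k) ^ (1 - η) * r ^ (L * η) := by
          have : 0 ≤ 1 - η := sub_nonneg.mpr hη
          gcongr

section Fibres

variable {R M : Type*} [MulZeroClass R] [DecidableEq R] [AddCommMonoid M] [LinearOrder M]
  {v : R → M} {A : Finset R}

lemma card_fibre_le (hv : ∀ a b, a ≠ 0 → b ≠ 0 → v (a * b) = v a + v b) (h0 : 0 ∉ A) {i : M}
    (hA : MulExpands L η {a ∈ A | v a = i} r) {B : Finset R} (hB : 0 ∉ B) (j : M) :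
    #{b ∈ B | v b = j} ^ (1 - η) * r ^ (L * η) ≤ #{x ∈ A * B | v x = j + i} := by
  have hsub : {a ∈ A | v a = i} * {b ∈ B | v b = j} ⊆ {x ∈ A * B | v x = j + i} := by
    intro x hx
    obtain ⟨a, ha, b, hb, rfl⟩ := mem_mul.mp hx
    obtain ⟨haA, rfl⟩ := mem_filter.mp ha
    obtain ⟨hbB, rfl⟩ := mem_filter.mp hb
    refine mem_filter.mpr ⟨mul_mem_mul haA hbB, ?_⟩
    rw [hv a b (ne_of_mem_of_not_mem haA h0) (ne_of_mem_of_not_mem hbB hB), add_comm]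
  exact (hA _ fun h => hB (mem_filter.mp h).1).trans (by exact_mod_cast card_le_card hsub)

lemma of_fibres [IsOrderedCancelAddMonoid M] {C r₀ r₁ : ℝ} (hη : IsGainExponent C L η)
    (hC : 1 ≤ C) (hL : 0 < L) (hv : ∀ a b, a ≠ 0 → b ≠ 0 → v (a * b) = v a + v b) (h0 : 0 ∉ A)
    {i₀ i₁ : M} (hi : i₀ ≠ i₁) (hr₁ : 0 < r₁) (hr : r₁ ≤ r₀)
    (h₀ : MulExpands L η {a ∈ A | v a = i₀} r₀) (h₁ : MulExpands L η {a ∈ A | v a = i₁} r₁) :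
    MulExpands L η A (r₀ + (C - 1) * r₁) := by
  intro B hB
  rcases B.eq_empty_or_nonempty with rfl | hBne
  · simp [Real.zero_rpow (sub_pos.mpr hη.lt_one).ne']
  have hr₀ : 0 < r₀ := hr₁.trans_le hr
  set X := r₁ / r₀
  have hX₀ : 0 < X := div_pos hr₁ hr₀
  have hr₁X : r₁ = r₀ * X := (mul_div_cancel₀ r₁ hr₀.ne').symm
  have hbase : 0 ≤ 1 + (C - 1) * X :=
    add_nonneg zero_le_one (mul_nonneg (sub_nonneg.mpr hC) hX₀.le)
  have hpow : 0 < r₀ ^ (L * η) := Real.rpow_pos_of_pos hr₀ _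
  have hgain := hη.sum_rpow_le_sum hC hL hX₀ ((div_le_one hr₀).mpr hr) hi (hBne.image v)
    (b := fun j => (#{b ∈ B | v b = j} : ℝ))
    (w := fun n => #{x ∈ A * B | v x = n} / r₀ ^ (L * η))
    (fun j hj => by exact_mod_cast fiber_card_ne_zero_iff_mem_image .. |>.mpr hj |>.bot_lt)
    (fun n => div_nonneg (Nat.cast_nonneg _) hpow.le)
    (fun j _ => (le_div_iff₀ hpow).mpr (h₀.card_fibre_le hv h0 hB j))
    (fun j _ => by
      rw [le_div_iff₀ hpow, mul_right_comm, ← Real.mul_rpow hX₀.le hr₀.le, mul_comm X, ← hr₁X,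
        mul_comm]
      exact h₁.card_fibre_le hv h0 hB j)
  have hBcard : ∑ j ∈ B.image v, (#{b ∈ B | v b = j} : ℝ) = #B := by
    exact_mod_cast (card_eq_sum_card_image v B).symm
  rw [hBcard, ← sum_div, le_div_iff₀ hpow] at hgain
  calc #B ^ (1 - η) * (r₀ + (C - 1) * r₁) ^ (L * η)
      = (1 + (C - 1) * X) ^ (L * η) * #B ^ (1 - η) * r₀ ^ (L * η) := by
        rw [mul_right_comm, ← Real.mul_rpow hbase hr₀.le, mul_comm, hr₁X]
        ring_nf
    _ ≤ ∑ n ∈ B.image v + {i₀, i₁}, (#{x ∈ A * B | v x = n} : ℝ) := hgain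
    _ ≤ #(A * B) := by
        rw [← Nat.cast_sum, sum_card_fiberwise_eq_card_filter]
        exact_mod_cast card_filter_le _ _

end Fibres

end MulExpands

/-! ### The dichotomy for sets of integers -/

lemma exists_sum_mul_le_two_largest {J : Type*} {s : Finset J} (hs : s.Nontrivial)
    {r φ : J → ℝ} {C Φ : ℝ} (hr : ∀ j ∈ s, 0 ≤ r j) (hφ : ∀ j ∈ s, 0 ≤ φ j)
    (hφΦ : ∀ j ∈ s, φ j ≤ Φ) (hsum : ∑ j ∈ s, φ j ≤ C * Φ) :
    ∃ i₀ ∈ s, ∃ i₁ ∈ s, i₀ ≠ i₁ ∧ r i₁ ≤ r i₀ ∧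
      ∑ j ∈ s, r j * φ j ≤ (r i₀ + (C - 1) * r i₁) * Φ := by
  classical
  obtain ⟨i₀, hi₀, hmax₀⟩ := exists_max_image s r hs.nonempty
  obtain ⟨i₁, hi₁, hmax₁⟩ := exists_max_image (s.erase i₀) r (hs.erase_nonempty)
  obtain ⟨hi, hi₁s⟩ := mem_erase.mp hi₁
  refine ⟨i₀, hi₀, i₁, hi₁s, hi.symm, hmax₀ i₁ hi₁s, ?_⟩
  calc ∑ j ∈ s, r j * φ j = r i₀ * φ i₀ + ∑ j ∈ s.erase i₀, r j * φ j :=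
        (add_sum_erase s _ hi₀).symm
    _ ≤ r i₀ * φ i₀ + ∑ j ∈ s.erase i₀, r i₁ * φ j := by
        gcongr with j hj
        exacts [hφ j (mem_of_mem_erase hj), hmax₁ j hj]
    _ = (r i₀ - r i₁) * φ i₀ + r i₁ * ∑ j ∈ s, φ j := by
        rw [← mul_sum, ← add_sum_erase s φ hi₀]
        ring
    _ ≤ (r i₀ - r i₁) * Φ + r i₁ * (C * Φ) := by
        gcongr
        exacts [sub_nonneg.mpr (hmax₀ i₁ hi₁s), hφΦ i₀ hi₀, hr i₁ hi₁s]
    _ = (r i₀ + (C - 1) * r i₁) * Φ := by ring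

lemma exists_hasSpreadWeight_mulExpands_of_fibres {M : Type*} [AddCommMonoid M] [LinearOrder M]
    [IsOrderedCancelAddMonoid M] {h : ℕ} (hh : h ≠ 0) {L η : ℝ} (hL : 0 < L)
    (hη : IsGainExponent ((2 * h) ^ 2) L η) {A : Finset ℤ} (h0 : 0 ∉ A) {v : ℤ → M}
    (hmul : ∀ a b, a ≠ 0 → b ≠ 0 → v (a * b) = v a + v b)
    (hv : ∀ x ∈ linearSolutions (halfSign h) A, ∃ s t, s ≠ t ∧ v (x s) = v (x t))
    (hvA : (A.image v).Nontrivial) {φ : M → ℝ} (hφ₀ : ∀ j ∈ A.image v, 0 < φ j)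
    (hφ : ∀ j ∈ A.image v, HasSpreadWeight h {a ∈ A | v a = j} (φ j))
    (hexp : ∀ j ∈ A.image v,
      MulExpands L η {a ∈ A | v a = j} (#{a ∈ A | v a = j} / (2 * φ j))) :
    ∃ φ, 0 < φ ∧ HasSpreadWeight h A φ ∧ MulExpands L η A (#A / (2 * φ)) := by
  obtain ⟨Φ, hΦ, hφΦ, hsum⟩ :=
    HasSpreadWeight.exists_ge_of_fibres hh (image_nonempty.mp hvA.nonempty) hv hφ
  set r : M → ℝ := fun j => #{a ∈ A | v a = j} / (2 * φ j)
  have hr (j : M) (hj : j ∈ A.image v) : 0 < r j :=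
    div_pos (by exact_mod_cast ((fiber_card_ne_zero_iff_mem_image A v j).mpr hj).bot_lt)
      (mul_pos two_pos (hφ₀ j hj))
  obtain ⟨i₀, hi₀, i₁, hi₁, hi, hr₁₀, hle⟩ := exists_sum_mul_le_two_largest hvA
    (fun j hj => (hr j hj).le) (fun j hj => (hφ₀ j hj).le) hφΦ hsum
  have hΦ₀ : 0 < Φ := (hφ₀ i₀ hi₀).trans_le (hφΦ i₀ hi₀)
  have hcard : ∑ j ∈ A.image v, r j * φ j = #A / 2 := by
    rw [card_eq_sum_card_image v A, Nat.cast_sum, sum_div]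
    refine sum_congr rfl fun j hj => ?_
    have := hφ₀ j hj
    simp only [r]
    field_simp
  have hC : (1 : ℝ) ≤ (2 * h) ^ 2 := by
    exact_mod_cast Nat.one_le_iff_ne_zero.mpr (by positivity)
  refine ⟨Φ, hΦ₀, hΦ, (MulExpands.of_fibres hη hC hL hmul h0 hi (hr i₁ hi₁) hr₁₀ (hexp i₀ hi₀)
    (hexp i₁ hi₁)).mono_right hL.le hη.pos.le (by positivity) ?_⟩
  rwa [← div_div, div_le_iff₀ hΦ₀, ← hcard]

theorem exists_hasSpreadWeight_mulExpands {h : ℕ} (hh : h ≠ 0) {L η : ℝ} (hL : 0 < L)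
    (hη : IsGainExponent ((2 * h) ^ 2) L η) {A : Finset ℤ} (h0 : 0 ∉ A) (hA : A.Nonempty) :
    ∃ φ, 0 < φ ∧ HasSpreadWeight h A φ ∧ MulExpands L η A (#A / (2 * φ)) := by
  induction A using Finset.strongInduction with
  | H A ih =>
  rcases le_or_gt #A 2 with hcard | hcard
  · refine ⟨1, one_pos, .one_of_nonempty hA,
      .of_le_one hη.pos.le hη.lt_one hL.le (by positivity) ?_ h0 hA⟩
    rw [mul_one, div_le_one two_pos]
    exact_mod_cast hcard
  obtain ⟨p, hp, a, ha, b, hb, hab⟩ := exists_prime_padicValInt_ne h0 hcard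
  have : Fact p.Prime := ⟨hp⟩
  have : Nonempty (Fin h ⊕ Fin h) := ⟨.inl ⟨0, Nat.pos_of_ne_zero hh⟩⟩
  have hssub (j : ℕ) : {a ∈ A | padicValInt p a = j} ⊂ A :=
    filter_ssubset.mpr <| by
      by_contra! hall
      exact hab ((hall a ha).trans (hall b hb).symm)
  choose! φ hφ₀ hφ hexp using fun (j : ℕ) (hj : j ∈ A.image (padicValInt p)) =>
    ih _ (hssub j) (fun h => h0 (mem_filter.mp h).1)
      (filter_nonempty_iff.mpr (mem_image.mp hj))
  exact exists_hasSpreadWeight_mulExpands_of_fibres hh hL hη h0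
    (fun a b ha hb => padicValInt.mul ha hb)
    (fun x hx => exists_padicValInt_eq_of_mem_linearSolutions p isUnit_halfSign h0 hx)
    ⟨_, mem_image_of_mem _ ha, _, mem_image_of_mem _ hb, hab⟩ hφ₀ hφ hexp

lemma lt_card_nsmul {M : Type*} [AddMonoid M] [LinearOrder M] [IsCancelAdd M] [AddLeftMono M]
    [AddRightMono M] {A : Finset M} (hA : A.Nontrivial) (k : ℕ) : k < #(k • A) := by
  induction k with
  | zero => simp
  | succ k ih =>
    have hCD := cauchy_davenport_add_of_linearOrder_isCancelAdd (hA.nonempty.nsmul (n := k))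
      hA.nonempty
    have := one_lt_card_iff_nontrivial.mpr hA
    rw [succ_nsmul]
    lia

lemma rpow_half_le_div {N φ : ℝ} (hN : 16 ≤ N) (hφ : 0 < φ) (hφN : φ ≤ N ^ (1 / 4 : ℝ)) :
    N ^ (1 / 2 : ℝ) ≤ N / (2 * φ) := by
  have hN₀ : 0 < N := by linarith
  have htwo : 2 ≤ N ^ (1 / 4 : ℝ) :=
    calc (2 : ℝ) = (2 ^ (4 : ℝ)) ^ (1 / 4 : ℝ) := by rw [← Real.rpow_mul two_pos.le]; norm_num
      _ ≤ N ^ (1 / 4 : ℝ) := by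
        gcongr
        norm_num
        exact hN
  rw [le_div_iff₀ (by positivity)]
  calc N ^ (1 / 2 : ℝ) * (2 * φ) ≤ N ^ (1 / 2 : ℝ) * (N ^ (1 / 4 : ℝ) * N ^ (1 / 4 : ℝ)) := by
        gcongr
    _ = N := by
      rw [← Real.rpow_add hN₀, ← Real.rpow_add hN₀]
      norm_num

lemma HasSpreadWeight.rpow_le_card_nsmul {b φ N : ℝ} {h k : ℕ} (hb : 4 * b ≤ h) (hhk : h ≤ k)
    {A : Finset ℤ} (hA : HasSpreadWeight h A φ) (hne : A.Nonempty) (hN : 1 ≤ N)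
    (hφ : N ^ (1 / 4 : ℝ) ≤ φ) : N ^ b ≤ #(k • A) := by
  have hφ₀ : 0 < φ := lt_of_lt_of_le (by positivity) hφ
  calc N ^ b ≤ N ^ (1 / 4 * h : ℝ) := by
        gcongr
        linarith
    _ = (N ^ (1 / 4 : ℝ)) ^ h := Real.rpow_mul_natCast (by positivity) _ _
    _ ≤ φ ^ h := by gcongr
    _ ≤ #(h • A) := hA.pow_le_card_nsmul hφ₀
    _ ≤ #(k • A) := by exact_mod_cast hne.card_nsmul_mono hhk

lemma MulExpands.rpow_le_card_pow_of_half_le {R : Type*} [MonoidWithZero R] [NoZeroDivisors R]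
    [Nontrivial R] [DecidableEq R] {b L η r N : ℝ} {k : ℕ} {A : Finset R}
    (hA : MulExpands L η A r) (h0 : 0 ∉ A) (hη : η ≤ 1) (hL : 0 ≤ L) (hb : 4 * b ≤ L)
    (hk : (1 - η) ^ k ≤ 1 / 2) (hN : 1 ≤ N) (hr : N ^ (1 / 2 : ℝ) ≤ r) : N ^ b ≤ #(A ^ k) := by
  have hr₁ : 1 ≤ r := (Real.one_le_rpow hN (by norm_num)).trans hr
  calc N ^ b ≤ N ^ (1 / 2 * (L / 2)) := by
        gcongr
        linarith
    _ = (N ^ (1 / 2 : ℝ)) ^ (L / 2) := Real.rpow_mul (by positivity) _ _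
    _ ≤ r ^ (L / 2) := by gcongr
    _ ≤ r ^ (L * (1 - (1 - η) ^ k)) := by
      gcongr
      nlinarith
    _ ≤ #(A ^ k) := hA.rpow_le_card_pow h0 hη (by positivity) k

theorem exists_rpow_card_le_max_card_nsmul_card_pow {b : ℝ} (hb : 0 ≤ b) :
    ∃ k : ℕ, 0 < k ∧ ∀ A : Finset ℤ, 0 ∉ A → A.Nontrivial →
      (#A : ℝ) ^ b ≤ max (#(k • A) : ℝ) #(A ^ k) := by
  obtain ⟨h, hh⟩ := exists_nat_ge (max (4 * b) 1)
  obtain ⟨hhb, hh₁⟩ := max_le_iff.mp hh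
  have hh₀ : (0 : ℝ) < h := by linarith
  obtain ⟨η, hη⟩ := exists_isGainExponent (C := (2 * h) ^ 2) (by positivity) hh₀
  obtain ⟨k, hkη, hkh, hk16⟩ := ((tendsto_pow_atTop_nhds_zero_of_lt_one
    (sub_nonneg.mpr hη.lt_one.le) (sub_lt_self 1 hη.pos)).eventually_le_const
    one_half_pos |>.and <| (Filter.eventually_ge_atTop h).and
    (tendsto_natCast_atTop_atTop.eventually_ge_atTop ((16 : ℝ) ^ b))).exists
  refine ⟨k, (Nat.cast_pos.mp hh₀).trans_le hkh, fun A h0 hA => ?_⟩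
  have hcard : (1 : ℝ) ≤ #A := by exact_mod_cast hA.nonempty.card_pos
  rcases le_or_gt (#A : ℝ) 16 with hsmall | hlarge
  · refine le_max_of_le_left ?_
    calc (#A : ℝ) ^ b ≤ 16 ^ b := by gcongr
      _ ≤ k := hk16
      _ ≤ #(k • A) := by exact_mod_cast (lt_card_nsmul hA k).le
  obtain ⟨φ, hφ₀, hφ, hexp⟩ :=
    exists_hasSpreadWeight_mulExpands (Nat.cast_pos.mp hh₀).ne' hh₀ hη h0 hA.nonempty
  rcases le_total ((#A : ℝ) ^ (1 / 4 : ℝ)) φ with hspread | hφle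
  · exact le_max_of_le_left (hφ.rpow_le_card_nsmul hhb hkh hA.nonempty hcard hspread)
  · exact le_max_of_le_right (hexp.rpow_le_card_pow_of_half_le h0 hη.lt_one.le hh₀.le hhb hkη hcard
      (rpow_half_le_div hlarge.le hφ₀ hφle))

lemma exists_smul_eq_image_intCast (A : Finset ℚ) :
    ∃ c : ℚ, c ≠ 0 ∧ ∃ B : Finset ℤ, B.image (Int.castRingHom ℚ) = c • A := by
  refine ⟨IsLocalization.commonDenomOfFinset (nonZeroDivisors ℤ) A, by simp,
    IsLocalization.finsetIntegerMultiple (nonZeroDivisors ℤ) A, coe_injective ?_⟩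
  rw [coe_image, coe_smul_finset]
  exact IsLocalization.finsetIntegerMultiple_image (nonZeroDivisors ℤ) A

lemma exists_int_finset_card_eq {A : Finset ℚ} (h0 : 0 ∉ A) :
    ∃ B : Finset ℤ, 0 ∉ B ∧ #B = #A ∧ ∀ k : ℕ, #(k • B) = #(k • A) ∧ #(B ^ k) = #(A ^ k) := by
  obtain ⟨c, hc, B, hB⟩ := exists_smul_eq_image_intCast A
  have hcard (S : Finset ℤ) : #(S.image (Int.castRingHom ℚ)) = #S :=
    card_image_of_injective S Int.cast_injective
  refine ⟨B, fun h => ?_, ?_, fun k => ⟨?_, ?_⟩⟩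
  · have : (0 : ℚ) ∈ c • A := hB ▸ mem_image.mpr ⟨0, h, map_zero _⟩
    exact h0 ((zero_mem_smul_finset_iff hc).mp this)
  · rw [← hcard, hB, card_smul_finset₀ hc]
  · rw [← hcard, image_nsmul, hB, smul_comm k c A, card_smul_finset₀ hc]
  · rw [← hcard, image_pow, hB, smul_pow, card_smul_finset₀ (pow_ne_zero k hc)]

theorem bourgain_chang_unbounded_growth (b : ℝ) (hb : 0 ≤ b) :
    ∃ k : ℕ, 0 < k ∧ ∀ A : Finset ℚ, (0 : ℚ) ∉ A → 2 ≤ A.card →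
      (A.card : ℝ) ^ b ≤
        max (((kfoldSum k A).card : ℝ)) (((kfoldProd k A).card : ℝ)) := by
  obtain ⟨k, hk, hgrow⟩ := exists_rpow_card_le_max_card_nsmul_card_pow hb
  refine ⟨k, hk, fun A h0 hA => ?_⟩
  obtain ⟨B, hB₀, hBA, hcard⟩ := exists_int_finset_card_eq h0
  have hB : B.Nontrivial := one_lt_card_iff_nontrivial.mp (hBA ▸ hA)
  rw [kfoldSum, kfoldProd, ← nsmul_eq_image_sum, ← pow_eq_image_prod, ← hBA, ← (hcard k).1,
    ← (hcard k).2]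
  exact hgrow B hB₀ hB
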